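/- arXiv:2008.04752 — 5 statements merged into one kernel-verified Lean document; each statement's English description precedes it below -/
import Mathlib

section
/- For every a ∈ Ω, the P-module A is given by A = {x ∈ ℝ^d : ψ_a(x) ≥ 0}. -/
/-!
Since `a` is interior to the cone `P`, for every vector `v` some `s • a + v` lies in `P`.
Hence every line in direction `a` meets `A` (move from a point of `A`) and leaves `A` (otherwise
`A` would contain every point). As `A` is closed and stable under adding positive multiples of `a`,
the parameters `t` with `x - t • a ∈ A` form a closed ray `(-∞, ψ_a(x)]`, and `x ∈ A` says that
this ray contains `0`.
-/

open Set Filter Topology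

/-- The parameters `t` at which the line `t ↦ x - t • a` lies in `A`. The function `ψ_a` is
`x ↦ sSup (lineParams A a x)`; the real `sSup` is the actual supremum only when this set is
nonempty and bounded above. -/
def lineParams {E : Type*} [AddCommGroup E] [Module ℝ E] (A : Set E) (a x : E) : Set ℝ :=
  {t : ℝ | x - t • a ∈ A}

section Algebraic

variable {E : Type*} [AddCommGroup E] [Module ℝ E] {P A : Set E} {a : E}

theorem isLowerSet_lineParams (hcone : ∀ c : ℝ, 0 < c → ∀ p ∈ P, c • p ∈ P)
    (hmod : ∀ x ∈ A, ∀ p ∈ P, x + p ∈ A) (ha : a ∈ P) (x : E) :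
    IsLowerSet (lineParams A a x) := by
  intro t s hst ht
  rcases hst.eq_or_lt with rfl | hlt
  · exact ht
  · have hmem := hmod _ ht _ (hcone (t - s) (sub_pos.mpr hlt) a ha)
    rwa [show x - t • a + (t - s) • a = x - s • a by module] at hmem

theorem lineParams_nonempty (habsorb : ∀ v : E, ∃ s : ℝ, s • a + v ∈ P)
    (hmod : ∀ x ∈ A, ∀ p ∈ P, x + p ∈ A) (hne : A.Nonempty) (x : E) :
    (lineParams A a x).Nonempty := by
  obtain ⟨z, hz⟩ := hne
  obtain ⟨s, hs⟩ := habsorb (x - z)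
  have hmem := hmod z hz _ hs
  rw [show z + (s • a + (x - z)) = x - (-s) • a by module] at hmem
  exact ⟨-s, hmem⟩

theorem bddAbove_lineParams (habsorb : ∀ v : E, ∃ s : ℝ, s • a + v ∈ P)
    (hmod : ∀ x ∈ A, ∀ p ∈ P, x + p ∈ A) (hproper : A ≠ univ) {x : E}
    (hlower : IsLowerSet (lineParams A a x)) : BddAbove (lineParams A a x) := by
  obtain ⟨y, hy⟩ := (ne_univ_iff_exists_notMem A).mp hproper
  obtain ⟨s, hs⟩ := habsorb (y - x)
  have hs_notMem : s ∉ lineParams A a x := fun hsA => hy <| by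
    have hmem := hmod _ hsA _ hs
    rwa [show x - s • a + (s • a + (y - x)) = y by module] at hmem
  exact ⟨s, fun t ht => le_of_not_ge fun hst => hs_notMem (hlower hst ht)⟩

end Algebraic

section Topological

variable {E : Type*} [AddCommGroup E] [Module ℝ E] [TopologicalSpace E] [IsTopologicalAddGroup E]
  [ContinuousSMul ℝ E] {P A : Set E} {a : E}

theorem exists_smul_add_mem_of_mem_interior (hcone : ∀ c : ℝ, 0 < c → ∀ p ∈ P, c • p ∈ P)
    (ha : a ∈ interior P) (v : E) : ∃ s : ℝ, s • a + v ∈ P := by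
  have htendsto : Tendsto (fun ε : ℝ => a + ε • v) (𝓝 0) (𝓝 a) :=
    (by fun_prop : Continuous fun ε : ℝ => a + ε • v).tendsto' 0 a (by simp)
  have hnear : ∀ᶠ ε in 𝓝[>] (0 : ℝ), a + ε • v ∈ P :=
    (htendsto.mono_left nhdsWithin_le_nhds).eventually (mem_interior_iff_mem_nhds.mp ha)
  obtain ⟨ε, hmem, hε : 0 < ε⟩ := (hnear.and self_mem_nhdsWithin).exists
  have hscaled := hcone ε⁻¹ (inv_pos.mpr hε) _ hmem
  rw [smul_add, inv_smul_smul₀ hε.ne'] at hscaled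
  exact ⟨ε⁻¹, hscaled⟩

theorem isClosed_lineParams (hclosed : IsClosed A) (a x : E) : IsClosed (lineParams A a x) :=
  hclosed.preimage (by fun_prop : Continuous fun t : ℝ => x - t • a)

theorem lineParams_eq_Iic_sSup (hcone : ∀ c : ℝ, 0 < c → ∀ p ∈ P, c • p ∈ P)
    (hne : A.Nonempty) (hclosed : IsClosed A) (hmod : ∀ x ∈ A, ∀ p ∈ P, x + p ∈ A)
    (hproper : A ≠ univ) (ha : a ∈ interior P) (x : E) :
    lineParams A a x = Iic (sSup (lineParams A a x)) := by
  have habsorb := exists_smul_add_mem_of_mem_interior hcone ha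
  have hlower := isLowerSet_lineParams hcone hmod (interior_subset ha) x
  calc lineParams A a x = lowerClosure (lineParams A a x) := hlower.lowerClosure.symm
    _ = Iic (sSup (lineParams A a x)) :=
      lowerClosure_eq_Iic_csSup (lineParams_nonempty habsorb hmod hne x)
        (bddAbove_lineParams habsorb hmod hproper hlower) (isClosed_lineParams hclosed a x)

theorem stmt_5_general (hcone : ∀ c : ℝ, 0 < c → ∀ p ∈ P, c • p ∈ P)
    (hne : A.Nonempty) (hclosed : IsClosed A) (hmod : ∀ x ∈ A, ∀ p ∈ P, x + p ∈ A)
    (hproper : A ≠ univ) (ha : a ∈ interior P) :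
    A = {x : E | 0 ≤ sSup {t : ℝ | x - t • a ∈ A}} := by
  ext x
  calc x ∈ A ↔ 0 ∈ lineParams A a x := by simp [lineParams]
    _ ↔ 0 ∈ Iic (sSup (lineParams A a x)) := by
      rw [← lineParams_eq_Iic_sSup hcone hne hclosed hmod hproper ha x]

end Topological

theorem stmt_5 {d : ℕ} (P A : Set (EuclideanSpace ℝ (Fin d)))
    (hPclosed : IsClosed P) (hPconvex : Convex ℝ P)
    (hPcone : ∀ c : ℝ, 0 ≤ c → ∀ x ∈ P, c • x ∈ P)
    (hPspan : Submodule.span ℝ P = ⊤)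
    (hPline : ∀ x ∈ P, -x ∈ P → x = 0)
    (hAne : A.Nonempty) (hAclosed : IsClosed A)
    (hAmod : ∀ x ∈ A, ∀ p ∈ P, x + p ∈ A)
    (hAproper : A ≠ Set.univ)
    (a : EuclideanSpace ℝ (Fin d)) (ha : a ∈ interior P) :
    A = {x : EuclideanSpace ℝ (Fin d) | 0 ≤ sSup {t : ℝ | x - t • a ∈ A}} :=
  stmt_5_general (fun c hc => hPcone c hc.le) hAne hAclosed hAmod hAproper ha
end

section
/- For every a ∈ Ω, the interior of A is given by Int(A) = {x ∈ ℝ^d : ψ_a(x) > 0}. -/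
/-!
Since `a` lies in the interior of the cone, every vector is absorbed by it after adding a large
multiple of `a`. As `A` is stable under adding the cone, `{t | x - t • a ∈ A}` is nonempty (start
from a point of `A`) and bounded above (otherwise every point would be in `A`), so its supremum is
positive exactly when it contains some `t > 0`. Such a `t` exists when `x` is interior, by moving
slightly in the direction `-a`; conversely `x = (x - t • a) + t • a` lies in the open set
`(x - t • a) + interior P`, which is contained in `A`.
-/

section

open Filter Set Topology
open scoped Pointwise

variable {E : Type*} [AddCommGroup E] [TopologicalSpace E] {P A : Set E} {a : E}

theorem add_mem_interior_of_add_subset [ContinuousConstVAdd E E] (hA : A + P ⊆ A)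
    {x p : E} (hx : x ∈ A) (hp : p ∈ interior P) : x + p ∈ interior A :=
  interior_mono hA (subset_interior_add_right (Set.add_mem_add hx hp))

variable [Module ℝ E]

theorem smul_mem_interior_of_forall_pos [ContinuousConstSMul ℝ E]
    (hP : ∀ c : ℝ, 0 < c → ∀ x ∈ P, c • x ∈ P) (ha : a ∈ interior P) {c : ℝ} (hc : 0 < c) :
    c • a ∈ interior P := by
  have hcP : c • P ⊆ P := smul_set_subset_iff.2 (hP c hc)
  have hmem : c • a ∈ interior (c • P) := by
    rw [interior_smul₀ hc.ne']
    exact smul_mem_smul_set ha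
  exact interior_mono hcP hmem

variable [IsTopologicalAddGroup E] [ContinuousSMul ℝ E]

theorem eventually_add_smul_mem (hP : ∀ c : ℝ, 0 < c → ∀ x ∈ P, c • x ∈ P)
    (ha : a ∈ interior P) (v : E) : ∀ᶠ t : ℝ in atTop, v + t • a ∈ P := by
  have hlim : Tendsto (fun t : ℝ => t⁻¹ • v + a) atTop (𝓝 a) := by
    simpa using ((tendsto_inv_atTop_zero (𝕜 := ℝ)).smul_const v).add_const a
  filter_upwards [hlim.eventually (mem_interior_iff_mem_nhds.1 ha), eventually_gt_atTop 0]
    with t hmem ht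
  simpa [smul_smul, ht.ne'] using hP t ht _ hmem

theorem exists_pos_sub_smul_mem_of_mem_interior {x : E} (hx : x ∈ interior A) (a : E) :
    ∃ t : ℝ, 0 < t ∧ x - t • a ∈ A := by
  have hlim : Tendsto (fun t : ℝ => x - t • a) (𝓝[>] 0) (𝓝 x) := by
    have hcont : Continuous fun t : ℝ => x - t • a := by fun_prop
    simpa using (hcont.tendsto 0).mono_left nhdsWithin_le_nhds
  exact (eventually_mem_nhdsWithin.and (hlim (mem_interior_iff_mem_nhds.1 hx))).exists

theorem mem_interior_iff_exists_pos_sub_smul_mem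
    (hP : ∀ c : ℝ, 0 < c → ∀ x ∈ P, c • x ∈ P) (hA : A + P ⊆ A) (ha : a ∈ interior P) {x : E} :
    x ∈ interior A ↔ ∃ t : ℝ, 0 < t ∧ x - t • a ∈ A := by
  refine ⟨fun hx => exists_pos_sub_smul_mem_of_mem_interior hx a, fun ⟨t, ht, hmem⟩ => ?_⟩
  simpa using add_mem_interior_of_add_subset hA hmem (smul_mem_interior_of_forall_pos hP ha ht)

theorem nonempty_setOf_sub_smul_mem (hP : ∀ c : ℝ, 0 < c → ∀ x ∈ P, c • x ∈ P)
    (hA : A + P ⊆ A) (hne : A.Nonempty) (ha : a ∈ interior P) (x : E) :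
    {t : ℝ | x - t • a ∈ A}.Nonempty := by
  obtain ⟨y, hy⟩ := hne
  obtain ⟨t, ht⟩ := (eventually_add_smul_mem hP ha (x - y)).exists
  have hx_eq : x - (-t) • a = y + (x - y + t • a) := by module
  have hmem : x - (-t) • a ∈ A := mem_of_eq_of_mem hx_eq (hA (Set.add_mem_add hy ht))
  exact ⟨-t, hmem⟩

theorem bddAbove_setOf_sub_smul_mem (hP : ∀ c : ℝ, 0 < c → ∀ x ∈ P, c • x ∈ P)
    (hA : A + P ⊆ A) (hne : A ≠ univ) (ha : a ∈ interior P) (x : E) :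
    BddAbove {t : ℝ | x - t • a ∈ A} := by
  obtain ⟨y, hy⟩ := (ne_univ_iff_exists_notMem A).1 hne
  obtain ⟨T, hT⟩ := eventually_atTop.1 (eventually_add_smul_mem hP ha (y - x))
  refine ⟨T, fun t ht => le_of_not_ge fun hTt => hy ?_⟩
  have hy_eq : y = (x - t • a) + (y - x + t • a) := by abel
  exact mem_of_eq_of_mem hy_eq (hA (Set.add_mem_add ht (hT t hTt)))

theorem stmt_7_general (hP : ∀ c : ℝ, 0 < c → ∀ x ∈ P, c • x ∈ P) (hA : A + P ⊆ A)
    (hAne : A.Nonempty) (hAproper : A ≠ univ) (ha : a ∈ interior P) :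
    interior A = {x : E | 0 < sSup {t : ℝ | x - t • a ∈ A}} := by
  ext x
  have hbdd := bddAbove_setOf_sub_smul_mem hP hA hAproper ha x
  have hne := nonempty_setOf_sub_smul_mem hP hA hAne ha x
  calc x ∈ interior A
    _ ↔ ∃ t : ℝ, 0 < t ∧ x - t • a ∈ A := mem_interior_iff_exists_pos_sub_smul_mem hP hA ha
    _ ↔ ∃ t ∈ {t : ℝ | x - t • a ∈ A}, 0 < t := exists_congr fun _ => and_comm
    _ ↔ 0 < sSup {t : ℝ | x - t • a ∈ A} := (lt_csSup_iff hbdd hne).symm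

end

theorem stmt_7 {d : ℕ} (P A : Set (EuclideanSpace ℝ (Fin d)))
    (hPclosed : IsClosed P) (hPconvex : Convex ℝ P)
    (hPcone : ∀ c : ℝ, 0 ≤ c → ∀ x ∈ P, c • x ∈ P)
    (hPspan : Submodule.span ℝ P = ⊤)
    (hPline : ∀ x ∈ P, -x ∈ P → x = 0)
    (hAne : A.Nonempty) (hAclosed : IsClosed A)
    (hAmod : ∀ x ∈ A, ∀ p ∈ P, x + p ∈ A)
    (hAproper : A ≠ Set.univ)
    (a : EuclideanSpace ℝ (Fin d)) (ha : a ∈ interior P) :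
    interior A = {x : EuclideanSpace ℝ (Fin d) | 0 < sSup {t : ℝ | x - t • a ∈ A}} :=
  stmt_7_general (fun c hc => hPcone c hc.le) (Set.add_subset_iff.2 hAmod) hAne hAproper ha
end

section
/- For every a ∈ Ω, the map ∂A × (0,∞) → Int(A) given by (x,t) ↦ x + t·a is a homeomorphism, where ∂A carries the subspace topology of ℝ^d and Int(A) denotes the interior of A. -/
/-!
Translating by a positive multiple of `a` pushes a `P`-module `A` into its own interior, and since
`P` contains a neighbourhood of `a`, every line in the direction `a` meets both `A` and its
complement. Hence such a line meets `A` in a closed ray starting at its only frontier point. The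
distance `depthAlong a A y` from that starting point to `y`, in units of `a`, is the second
coordinate of the inverse map. It is continuous because `{y | t ≤ depthAlong a A y}` and
`{y | t < depthAlong a A y}` are the translates by `t • a` of `A` and of its interior, the first
closed and the second open.
-/

open Filter Topology Set

variable {E : Type*} [AddCommGroup E] [Module ℝ E]

/-- The signed distance, in units of `a`, that one can travel from `y` in the direction `-a` before
leaving `A` for good. It has the junk value `0` if the line through `y` in the direction `a` misses
`A`, or if it meets `A` arbitrarily far in the direction `-a`. -/
noncomputable def depthAlong (a : E) (A : Set E) (y : E) : ℝ :=
  sSup {t : ℝ | y - t • a ∈ A}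

variable [TopologicalSpace E]

/-- `A` looks like the closed epigraph of a continuous function, with `a` as the upward direction:
it is closed, moving upwards leads into its interior, and every vertical line meets both `A` and its
complement. Proper `P`-modules have this shape in every direction `a` interior to `P`. -/
structure IsEpigraphAlong (a : E) (A : Set E) : Prop where
  isClosed : IsClosed A
  add_smul_mem_interior : ∀ x ∈ A, ∀ t : ℝ, 0 < t → x + t • a ∈ interior A
  exists_sub_smul_mem : ∀ y, ∃ t : ℝ, y - t • a ∈ A
  exists_sub_smul_notMem : ∀ y, ∃ t : ℝ, y - t • a ∉ A

namespace IsEpigraphAlong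

variable {a : E} {A : Set E}

theorem sub_smul_mem_interior_of_lt (hA : IsEpigraphAlong a A) {y : E} {s t : ℝ} (hst : s < t)
    (ht : y - t • a ∈ A) : y - s • a ∈ interior A := by
  have hshift : y - s • a = y - t • a + (t - s) • a := by module
  rw [hshift]
  exact hA.add_smul_mem_interior _ ht _ (sub_pos.2 hst)

theorem bddAbove_setOf_sub_smul_mem (hA : IsEpigraphAlong a A) (y : E) :
    BddAbove {t : ℝ | y - t • a ∈ A} := by
  obtain ⟨s, hs⟩ := hA.exists_sub_smul_notMem y
  refine ⟨s, fun t ht => le_of_not_gt fun hst => hs ?_⟩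
  exact interior_subset (hA.sub_smul_mem_interior_of_lt hst ht)

variable [IsTopologicalAddGroup E] [ContinuousSMul ℝ E]

theorem sub_depthAlong_smul_mem (hA : IsEpigraphAlong a A) (y : E) :
    y - depthAlong a A y • a ∈ A := by
  have hclosed : IsClosed {t : ℝ | y - t • a ∈ A} := hA.isClosed.preimage (by fun_prop)
  exact hclosed.csSup_mem (hA.exists_sub_smul_mem y) (hA.bddAbove_setOf_sub_smul_mem y)

theorem sub_smul_mem_iff (hA : IsEpigraphAlong a A) {y : E} {t : ℝ} :
    y - t • a ∈ A ↔ t ≤ depthAlong a A y := by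
  refine ⟨fun ht => le_csSup (hA.bddAbove_setOf_sub_smul_mem y) ht, fun ht => ?_⟩
  rcases ht.eq_or_lt with rfl | ht
  · exact hA.sub_depthAlong_smul_mem y
  · exact interior_subset (hA.sub_smul_mem_interior_of_lt ht (hA.sub_depthAlong_smul_mem y))

theorem sub_smul_mem_interior_iff (hA : IsEpigraphAlong a A) {y : E} {t : ℝ} :
    y - t • a ∈ interior A ↔ t < depthAlong a A y := by
  refine ⟨fun ht => ?_, fun ht => hA.sub_smul_mem_interior_of_lt ht (hA.sub_depthAlong_smul_mem y)⟩
  have hnear : ∀ᶠ u : ℝ in 𝓝 t, y - u • a ∈ interior A :=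
    (isOpen_interior.preimage (f := fun u : ℝ => y - u • a) (by fun_prop)).mem_nhds ht
  obtain ⟨u, htu, hu⟩ := hnear.exists_gt
  exact htu.trans_le (hA.sub_smul_mem_iff.1 (interior_subset hu))

theorem sub_smul_mem_frontier_iff (hA : IsEpigraphAlong a A) {y : E} {t : ℝ} :
    y - t • a ∈ frontier A ↔ depthAlong a A y = t := by
  rw [hA.isClosed.frontier_eq, Set.mem_sdiff, hA.sub_smul_mem_iff, hA.sub_smul_mem_interior_iff,
    not_lt, ← le_antisymm_iff, eq_comm]

theorem mem_interior_iff_depthAlong_pos (hA : IsEpigraphAlong a A) {y : E} :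
    y ∈ interior A ↔ 0 < depthAlong a A y := by
  simpa only [zero_smul, sub_zero] using hA.sub_smul_mem_interior_iff (y := y) (t := 0)

theorem depthAlong_add_smul (hA : IsEpigraphAlong a A) {x : E} (hx : x ∈ frontier A) (t : ℝ) :
    depthAlong a A (x + t • a) = t :=
  hA.sub_smul_mem_frontier_iff.1 (by rwa [add_sub_cancel_right])

theorem continuous_depthAlong (hA : IsEpigraphAlong a A) : Continuous (depthAlong a A) := by
  refine OrderTopology.continuous_iff.2 fun t => ⟨?_, ?_⟩
  · have hpreimage : depthAlong a A ⁻¹' Ioi t = (fun y => y - t • a) ⁻¹' interior A :=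
      ext fun _ => hA.sub_smul_mem_interior_iff.symm
    rw [hpreimage]
    exact isOpen_interior.preimage (by fun_prop)
  · have hpreimage : depthAlong a A ⁻¹' Iio t = (fun y => y - t • a) ⁻¹' Aᶜ :=
      ext fun _ => not_le.symm.trans hA.sub_smul_mem_iff.not.symm
    rw [hpreimage]
    exact hA.isClosed.isOpen_compl.preimage (by fun_prop)

/-- The homeomorphism `(x, t) ↦ x + t • a` from `∂A × (0, ∞)` onto the interior of `A`. -/
noncomputable def frontierProdIoiHomeomorph (hA : IsEpigraphAlong a A) :
    frontier A × Ioi (0 : ℝ) ≃ₜ interior A where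
  toFun p := ⟨p.1 + (p.2 : ℝ) • a,
    hA.add_smul_mem_interior _ (hA.isClosed.frontier_subset p.1.2) _ p.2.2⟩
  invFun y := (⟨y - depthAlong a A y • a, hA.sub_smul_mem_frontier_iff.2 rfl⟩,
    ⟨depthAlong a A y, hA.mem_interior_iff_depthAlong_pos.1 y.2⟩)
  left_inv p := by
    ext1 <;> ext1 <;> simp only [hA.depthAlong_add_smul p.1.2, add_sub_cancel_right]
  right_inv y := Subtype.ext (sub_add_cancel _ _)
  continuous_toFun := by fun_prop
  continuous_invFun := by
    have hdepth := hA.continuous_depthAlong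
    fun_prop

end IsEpigraphAlong

variable [IsTopologicalAddGroup E] [ContinuousSMul ℝ E] {P A : Set E} {a : E}

theorem exists_add_smul_mem_of_mem_interior (hPcone : ∀ c : ℝ, 0 < c → ∀ x ∈ P, c • x ∈ P)
    (ha : a ∈ interior P) (v : E) : ∃ s : ℝ, v + s • a ∈ P := by
  have hlim : Tendsto (fun s : ℝ => s⁻¹ • v + a) atTop (𝓝 a) := by
    have hinv : Tendsto (fun s : ℝ => s⁻¹) atTop (𝓝 0) := tendsto_inv_atTop_zero
    simpa only [zero_smul, zero_add] using (hinv.smul_const v).add_const a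
  have hmem : ∀ᶠ s : ℝ in atTop, s⁻¹ • v + a ∈ P :=
    hlim.eventually (mem_interior_iff_mem_nhds.1 ha)
  obtain ⟨s, hs, hspos⟩ := (hmem.and (eventually_gt_atTop 0)).exists
  refine ⟨s, ?_⟩
  simpa only [smul_add, smul_inv_smul₀ hspos.ne'] using hPcone s hspos _ hs

theorem add_smul_mem_interior_of_mem_interior (hPcone : ∀ c : ℝ, 0 < c → ∀ x ∈ P, c • x ∈ P)
    (hAmod : ∀ x ∈ A, ∀ p ∈ P, x + p ∈ A) (ha : a ∈ interior P) {x : E} (hx : x ∈ A) {t : ℝ}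
    (ht : 0 < t) : x + t • a ∈ interior A := by
  have hopen : IsOpen ((fun w => t⁻¹ • (w - x)) ⁻¹' interior P) :=
    isOpen_interior.preimage (by fun_prop)
  refine interior_maximal (fun w hw => ?_) hopen ?_
  · have hmem := hAmod x hx _ (hPcone t ht _ (interior_subset hw))
    rwa [smul_inv_smul₀ ht.ne', add_sub_cancel] at hmem
  · rwa [mem_preimage, add_sub_cancel_left, inv_smul_smul₀ ht.ne']

theorem isEpigraphAlong_of_mem_interior (hPcone : ∀ c : ℝ, 0 < c → ∀ x ∈ P, c • x ∈ P)
    (hAne : A.Nonempty) (hAclosed : IsClosed A) (hAmod : ∀ x ∈ A, ∀ p ∈ P, x + p ∈ A)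
    (hAproper : A ≠ univ) (ha : a ∈ interior P) : IsEpigraphAlong a A where
  isClosed := hAclosed
  add_smul_mem_interior _ hx _ ht := add_smul_mem_interior_of_mem_interior hPcone hAmod ha hx ht
  exists_sub_smul_mem y := by
    obtain ⟨x, hx⟩ := hAne
    obtain ⟨s, hs⟩ := exists_add_smul_mem_of_mem_interior hPcone ha (y - x)
    refine ⟨-s, ?_⟩
    convert hAmod x hx _ hs using 1
    module
  exists_sub_smul_notMem y := by
    obtain ⟨w, hw⟩ := (ne_univ_iff_exists_notMem A).1 hAproper
    obtain ⟨s, hs⟩ := exists_add_smul_mem_of_mem_interior hPcone ha (w - y)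
    refine ⟨s, fun hy => hw ?_⟩
    convert hAmod _ hy _ hs using 1
    module

theorem stmt_9_general (hPcone : ∀ c : ℝ, 0 < c → ∀ x ∈ P, c • x ∈ P)
    (hAne : A.Nonempty) (hAclosed : IsClosed A) (hAmod : ∀ x ∈ A, ∀ p ∈ P, x + p ∈ A)
    (hAproper : A ≠ univ) (ha : a ∈ interior P) :
    ∃ h : frontier A × Ioi (0 : ℝ) ≃ₜ interior A,
      ∀ (x : frontier A) (t : Ioi (0 : ℝ)), (h (x, t) : E) = x + (t : ℝ) • a :=
  have hA := isEpigraphAlong_of_mem_interior hPcone hAne hAclosed hAmod hAproper ha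
  ⟨hA.frontierProdIoiHomeomorph, fun _ _ => rfl⟩

theorem stmt_9 {d : ℕ} (P A : Set (EuclideanSpace ℝ (Fin d)))
    (hPclosed : IsClosed P) (hPconvex : Convex ℝ P)
    (hPcone : ∀ c : ℝ, 0 ≤ c → ∀ x ∈ P, c • x ∈ P)
    (hPspan : Submodule.span ℝ P = ⊤)
    (hPline : ∀ x ∈ P, -x ∈ P → x = 0)
    (hAne : A.Nonempty) (hAclosed : IsClosed A)
    (hAmod : ∀ x ∈ A, ∀ p ∈ P, x + p ∈ A)
    (hAproper : A ≠ Set.univ)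
    (a : EuclideanSpace ℝ (Fin d)) (ha : a ∈ interior P) :
    ∃ h : (frontier A) × (Set.Ioi (0 : ℝ)) ≃ₜ (interior A),
      ∀ (x : frontier A) (t : Set.Ioi (0 : ℝ)),
        (h (x, t) : EuclideanSpace ℝ (Fin d)) = (x : EuclideanSpace ℝ (Fin d)) + (t : ℝ) • a :=
  stmt_9_general (fun c hc => hPcone c hc.le) hAne hAclosed hAmod hAproper ha
end

section
/- For every a ∈ Ω, the map ∂A × ℝ → ℝ^d given by (x,t) ↦ x + t·a is a homeomorphism (in particular it is a bijection: every point of ℝ^d is uniquely of the form x + t·a with x ∈ ∂A and t ∈ ℝ). -/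
/-!
Moving a point of `closure A` by a positive multiple of `a ∈ interior P` lands in `interior A`,
because `closure A + interior P = A + interior P` is open and contained in `A`. As moreover the
multiples of `a` eventually absorb every vector into `P`, each line in direction `a` meets both `A`
and its complement. Hence each such line crosses the frontier exactly once, at a time `τ y`
characterised by `τ y ≤ t ↔ y + t • a ∈ closure A` and `τ y < t ↔ y + t • a ∈ interior A`. These two
equivalences make `τ` continuous, and `y ↦ (y + τ y • a, -τ y)` is the inverse map.
-/

open Filter Topology Set
open scoped Pointwise

section EpigraphAlong

variable {E : Type*} [AddCommGroup E] [Module ℝ E] [TopologicalSpace E] {a y : E} {A : Set E}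
  {s t : ℝ}

/-- `A` lies above a continuous graph over the quotient by the line `ℝ a`: every line in direction
`a` meets both `A` and its complement, and passes at once from `closure A` into `interior A`. The
set `A` may contain only a part of its frontier. -/
structure IsEpigraphAlong_s10 (a : E) (A : Set E) : Prop where
  add_smul_mem_interior : ∀ x ∈ closure A, ∀ t : ℝ, 0 < t → x + t • a ∈ interior A
  exists_add_smul_mem : ∀ y, ∃ t : ℝ, y + t • a ∈ A
  exists_add_smul_notMem : ∀ y, ∃ t : ℝ, y + t • a ∉ A

/-- The time at which the line `t ↦ y + t • a` enters `A`. It is meaningful when the times spent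
in `A` are nonempty and bounded below, as they are if `IsEpigraphAlong a A`. -/
noncomputable def entryTime (a : E) (A : Set E) (y : E) : ℝ :=
  sInf {t | y + t • a ∈ A}

namespace IsEpigraphAlong_s10

theorem mem_interior_of_mem_closure_of_lt (hA : IsEpigraphAlong_s10 a A)
    (hs : y + s • a ∈ closure A) (hst : s < t) : y + t • a ∈ interior A := by
  have h := hA.add_smul_mem_interior _ hs (t - s) (sub_pos.2 hst)
  rwa [add_assoc, ← add_smul, add_sub_cancel] at h

theorem bddBelow_setOf_add_smul_mem (hA : IsEpigraphAlong_s10 a A) (y : E) :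
    BddBelow {t : ℝ | y + t • a ∈ A} := by
  obtain ⟨t₀, ht₀⟩ := hA.exists_add_smul_notMem y
  refine ⟨t₀, fun t ht => le_of_not_gt fun htt₀ => ht₀ ?_⟩
  exact interior_subset (hA.mem_interior_of_mem_closure_of_lt (subset_closure ht) htt₀)

theorem entryTime_le (hA : IsEpigraphAlong_s10 a A) (ht : y + t • a ∈ A) : entryTime a A y ≤ t :=
  csInf_le (hA.bddBelow_setOf_add_smul_mem y) ht

theorem mem_interior_of_entryTime_lt (hA : IsEpigraphAlong_s10 a A) (ht : entryTime a A y < t) :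
    y + t • a ∈ interior A := by
  obtain ⟨s, hs, hst⟩ := exists_lt_of_csInf_lt (hA.exists_add_smul_mem y) ht
  exact hA.mem_interior_of_mem_closure_of_lt (subset_closure hs) hst

variable [ContinuousAdd E] [ContinuousSMul ℝ E]

theorem add_smul_mem_closure_iff (hA : IsEpigraphAlong_s10 a A) :
    y + t • a ∈ closure A ↔ entryTime a A y ≤ t := by
  constructor
  · intro ht
    exact le_of_forall_gt_imp_ge_of_dense fun s hts =>
      hA.entryTime_le (interior_subset (hA.mem_interior_of_mem_closure_of_lt ht hts))
  · intro ht
    have hline : Tendsto (fun s : ℝ => y + s • a) (𝓝[>] t) (𝓝 (y + t • a)) :=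
      (Continuous.tendsto (by fun_prop) t).mono_left nhdsWithin_le_nhds
    refine mem_closure_of_tendsto hline ?_
    filter_upwards [self_mem_nhdsWithin] with s hts
    exact interior_subset (hA.mem_interior_of_entryTime_lt (ht.trans_lt hts))

theorem add_smul_mem_interior_iff (hA : IsEpigraphAlong_s10 a A) :
    y + t • a ∈ interior A ↔ entryTime a A y < t := by
  refine ⟨fun ht => ?_, hA.mem_interior_of_entryTime_lt⟩
  have hline : Tendsto (fun s : ℝ => y + s • a) (𝓝[<] t) (𝓝 (y + t • a)) :=
    (Continuous.tendsto (by fun_prop) t).mono_left nhdsWithin_le_nhds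
  have hmem : ∀ᶠ s in 𝓝[<] t, y + s • a ∈ A := hline (mem_interior_iff_mem_nhds.1 ht)
  obtain ⟨s, hs, hst⟩ := (hmem.and self_mem_nhdsWithin).exists
  exact (hA.entryTime_le hs).trans_lt hst

theorem add_smul_mem_frontier_iff (hA : IsEpigraphAlong_s10 a A) :
    y + t • a ∈ frontier A ↔ entryTime a A y = t := by
  rw [frontier, Set.mem_sdiff, hA.add_smul_mem_closure_iff, hA.add_smul_mem_interior_iff, not_lt,
    le_antisymm_iff]

theorem continuous_entryTime (hA : IsEpigraphAlong_s10 a A) : Continuous (entryTime a A) := by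
  refine OrderTopology.continuous_iff.2 fun t => ⟨?_, ?_⟩
  · have hpre : entryTime a A ⁻¹' Ioi t = (fun y => y + t • a) ⁻¹' (closure A)ᶜ := by
      ext y
      rw [mem_preimage, mem_preimage, mem_compl_iff, hA.add_smul_mem_closure_iff, not_le, mem_Ioi]
    rw [hpre]
    exact isClosed_closure.isOpen_compl.preimage (by fun_prop)
  · have hpre : entryTime a A ⁻¹' Iio t = (fun y => y + t • a) ⁻¹' interior A := by
      ext y
      rw [mem_preimage, mem_preimage, hA.add_smul_mem_interior_iff, mem_Iio]
    rw [hpre]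
    exact isOpen_interior.preimage (by fun_prop)

theorem entryTime_add_smul_of_mem_frontier (hA : IsEpigraphAlong_s10 a A) {x : E}
    (hx : x ∈ frontier A) (t : ℝ) : entryTime a A (x + t • a) = -t := by
  rwa [← hA.add_smul_mem_frontier_iff, neg_smul, add_neg_cancel_right]

/-- Flowing the frontier of `A` along `a` parametrises the whole space, by
`(x, t) ↦ x + t • a`. -/
noncomputable def frontierProdHomeomorph (hA : IsEpigraphAlong_s10 a A) : frontier A × ℝ ≃ₜ E where
  toFun p := p.1 + p.2 • a
  invFun y := (⟨y + entryTime a A y • a, hA.add_smul_mem_frontier_iff.2 rfl⟩, -entryTime a A y)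
  left_inv := by
    rintro ⟨⟨x, hx⟩, t⟩
    simp [hA.entryTime_add_smul_of_mem_frontier hx]
  right_inv y := by simp
  continuous_toFun := by fun_prop
  continuous_invFun := by
    have := hA.continuous_entryTime
    fun_prop

end IsEpigraphAlong_s10

end EpigraphAlong

section ConeModule

theorem closure_add_interior_subset_interior {G : Type*} [AddGroup G] [TopologicalSpace G]
    [IsTopologicalAddGroup G] {A P : Set G} (hAmod : A + P ⊆ A) :
    closure A + interior P ⊆ interior A := by
  rw [isOpen_interior.closure_add]
  exact interior_maximal ((add_subset_add_left interior_subset).trans hAmod)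
    isOpen_interior.add_left

variable {E : Type*} [AddCommGroup E] [Module ℝ E] [TopologicalSpace E] {P A : Set E} {a : E}

theorem smul_mem_interior_of_cone [ContinuousConstSMul ℝ E]
    (hPcone : ∀ c : ℝ, 0 < c → ∀ x ∈ P, c • x ∈ P)
    (ha : a ∈ interior P) {t : ℝ} (ht : 0 < t) : t • a ∈ interior P := by
  have hsub : t • P ⊆ P := smul_set_subset_iff.2 fun x hx => hPcone t ht x hx
  have hmem : t • a ∈ interior (t • P) := by
    rw [interior_smul₀ ht.ne']
    exact smul_mem_smul_set ha
  exact interior_mono hsub hmem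

theorem eventually_add_smul_mem_cone [ContinuousAdd E] [ContinuousSMul ℝ E]
    (hPcone : ∀ c : ℝ, 0 < c → ∀ x ∈ P, c • x ∈ P)
    (ha : a ∈ interior P) (v : E) : ∀ᶠ t : ℝ in atTop, v + t • a ∈ P := by
  have hlim : Tendsto (fun t : ℝ => t⁻¹ • v + a) atTop (𝓝 a) := by
    simpa using ((tendsto_inv_atTop_zero (𝕜 := ℝ)).smul_const v).add_const a
  filter_upwards [hlim (mem_interior_iff_mem_nhds.1 ha), eventually_gt_atTop 0] with t hmem ht
  have h := hPcone t ht _ hmem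
  rwa [smul_add, smul_inv_smul₀ ht.ne'] at h

variable [IsTopologicalAddGroup E] [ContinuousSMul ℝ E]

theorem isEpigraphAlong_of_add_cone_subset (hPcone : ∀ c : ℝ, 0 < c → ∀ x ∈ P, c • x ∈ P)
    (hAne : A.Nonempty) (hAmod : A + P ⊆ A) (hAproper : A ≠ univ) (ha : a ∈ interior P) :
    IsEpigraphAlong_s10 a A where
  add_smul_mem_interior x hx t ht :=
    closure_add_interior_subset_interior hAmod
      (add_mem_add hx (smul_mem_interior_of_cone hPcone ha ht))
  exists_add_smul_mem y := by
    obtain ⟨x, hx⟩ := hAne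
    obtain ⟨t, ht⟩ := (eventually_add_smul_mem_cone hPcone ha (y - x)).exists
    have hy : x + (y - x + t • a) = y + t • a := by module
    exact ⟨t, hy ▸ hAmod (add_mem_add hx ht)⟩
  exists_add_smul_notMem y := by
    obtain ⟨z, hz⟩ := (ne_univ_iff_exists_notMem A).1 hAproper
    obtain ⟨t, ht⟩ := (eventually_add_smul_mem_cone hPcone ha (z - y)).exists
    have hzy : y + (-t) • a + (z - y + t • a) = z := by module
    exact ⟨-t, fun hy => hz (hzy ▸ hAmod (add_mem_add hy ht))⟩

theorem stmt_10_general (hPcone : ∀ c : ℝ, 0 < c → ∀ x ∈ P, c • x ∈ P)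
    (hAne : A.Nonempty) (hAmod : A + P ⊆ A) (hAproper : A ≠ univ) (ha : a ∈ interior P) :
    ∃ h : frontier A × ℝ ≃ₜ E, ∀ (x : frontier A) (t : ℝ), h (x, t) = (x : E) + t • a :=
  have hA := isEpigraphAlong_of_add_cone_subset hPcone hAne hAmod hAproper ha
  ⟨hA.frontierProdHomeomorph, fun _ _ => rfl⟩

end ConeModule

theorem stmt_10 {d : ℕ} (P A : Set (EuclideanSpace ℝ (Fin d)))
    (hPclosed : IsClosed P) (hPconvex : Convex ℝ P)
    (hPcone : ∀ c : ℝ, 0 ≤ c → ∀ x ∈ P, c • x ∈ P)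
    (hPspan : Submodule.span ℝ P = ⊤)
    (hPline : ∀ x ∈ P, -x ∈ P → x = 0)
    (hAne : A.Nonempty) (hAclosed : IsClosed A)
    (hAmod : ∀ x ∈ A, ∀ p ∈ P, x + p ∈ A)
    (hAproper : A ≠ Set.univ)
    (a : EuclideanSpace ℝ (Fin d)) (ha : a ∈ interior P) :
    ∃ h : (frontier A) × ℝ ≃ₜ EuclideanSpace ℝ (Fin d),
      ∀ (x : frontier A) (t : ℝ),
        h (x, t) = (x : EuclideanSpace ℝ (Fin d)) + t • a :=
  stmt_10_general (fun c hc => hPcone c hc.le) hAne (Set.add_subset_iff.2 hAmod) hAproper ha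
end

section
/- Let n ≥ 1 and let φ : ℝ^n → ℝ be a continuous function such that φ(r + c) = φ(r) + φ(c) for every r ∈ ℝ^n and every c ∈ ℝ^n all of whose coordinates are strictly positive. Then there exists a unique μ ∈ ℝ^n such that φ(r) = ⟨r, μ⟩ (the standard inner product) for all r ∈ ℝ^n. -/
open scoped RealInnerProductSpace

/-!
The elements `c` for which `φ (r + c) = φ r + φ c` holds for every `r` form a closed subgroup as
soon as there is one. The positive orthant is open and nonempty, so in the connected group `ℝ^n` it
generates everything and `φ` is additive. A continuous additive map is linear, and the Riesz
representation theorem gives `μ`.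
-/

section Additivity

variable {G A : Type*} [AddGroup G] [AddGroup A] {f : G → A} {S : Set G}

theorem map_zero_of_map_add_right {c : G} (h : ∀ r, f (r + c) = f r + f c) : f 0 = 0 := by
  simpa using h 0

theorem map_add_neg_of_map_add_right {c : G} (h : ∀ r, f (r + c) = f r + f c) (r : G) :
    f (r + -c) = f r + -f c :=
  eq_add_neg_of_add_eq <| by rw [← h, neg_add_cancel_right]

theorem map_add_of_mem_addSubgroup_closure (hS : S.Nonempty)
    (h : ∀ r, ∀ c ∈ S, f (r + c) = f r + f c) {c : G} (hc : c ∈ AddSubgroup.closure S) :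
    ∀ r, f (r + c) = f r + f c := by
  obtain ⟨s, hs⟩ := hS
  have map_zero : f 0 = 0 := map_zero_of_map_add_right (h · s hs)
  induction hc using AddSubgroup.closure_induction with
  | mem c hc => exact (h · c hc)
  | zero => simp [map_zero]
  | add c d _ _ hc hd => intro r; rw [← add_assoc, hd, hc, hd, add_assoc]
  | neg c _ hc =>
    have map_neg : f (-c) = -f c := by
      simpa [map_zero] using map_add_neg_of_map_add_right hc 0
    intro r
    rw [map_add_neg_of_map_add_right hc, map_neg]

variable [TopologicalSpace G] [SeparatelyContinuousAdd G]

theorem map_add_of_dense_addSubgroup_closure [TopologicalSpace A] [SeparatelyContinuousAdd A]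
    [T2Space A] (hf : Continuous f) (hS : S.Nonempty)
    (hdense : Dense (AddSubgroup.closure S : Set G))
    (h : ∀ r, ∀ c ∈ S, f (r + c) = f r + f c) (r s : G) : f (r + s) = f r + f s := by
  have hclosed : IsClosed {c | f (r + c) = f r + f c} :=
    isClosed_eq (hf.comp (continuous_const_add r)) ((continuous_const_add (f r)).comp hf)
  exact hclosed.closure_subset_iff.2
    (fun _ hc ↦ map_add_of_mem_addSubgroup_closure hS h hc r) (hdense s)

theorem addSubgroup_closure_eq_top_of_isOpen [PreconnectedSpace G] (hS : IsOpen S)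
    (hne : S.Nonempty) : AddSubgroup.closure S = ⊤ := by
  obtain ⟨s, hs⟩ := hne
  have hopen : IsOpen (AddSubgroup.closure S : Set G) :=
    AddSubgroup.isOpen_of_mem_nhds _
      (Filter.mem_of_superset (hS.mem_nhds hs) AddSubgroup.subset_closure)
  have hclopen : IsClopen (AddSubgroup.closure S : Set G) :=
    ⟨AddSubgroup.isClosed_of_isOpen _ hopen, hopen⟩
  exact AddSubgroup.coe_eq_univ.1 (hclopen.eq_univ ⟨0, zero_mem _⟩)

end Additivity

theorem existsUnique_forall_eq_inner {𝕜 E : Type*} [RCLike 𝕜] [NormedAddCommGroup E]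
    [InnerProductSpace 𝕜 E] [CompleteSpace E] (L : StrongDual 𝕜 E) :
    ∃! μ : E, ∀ r, L r = inner 𝕜 μ r := by
  simpa only [ContinuousLinearMap.ext_iff, InnerProductSpace.toDual_apply_apply, eq_comm]
    using (InnerProductSpace.toDual 𝕜 E).bijective.existsUnique L

theorem isOpen_setOf_forall_pos (ι : Type*) [Finite ι] :
    IsOpen {c : EuclideanSpace ℝ ι | ∀ i, 0 < c i} := by
  simp only [Set.ofPred_forall]
  exact isOpen_iInter_of_finite fun i ↦ isOpen_lt continuous_const (by fun_prop)

theorem nonempty_setOf_forall_pos (ι : Type*) :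
    {c : EuclideanSpace ℝ ι | ∀ i, 0 < c i}.Nonempty :=
  ⟨WithLp.toLp 2 1, fun _ ↦ one_pos⟩

theorem stmt_13_general {E : Type*} [NormedAddCommGroup E] [InnerProductSpace ℝ E]
    [CompleteSpace E] {S : Set E} (hS : S.Nonempty)
    (hdense : Dense (AddSubgroup.closure S : Set E)) {φ : E → ℝ} (hφcont : Continuous φ)
    (hφ : ∀ r, ∀ c ∈ S, φ (r + c) = φ r + φ c) :
    ∃! μ : E, ∀ r, φ r = ⟪r, μ⟫ := by
  have hadd := map_add_of_dense_addSubgroup_closure hφcont hS hdense hφ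
  let L : StrongDual ℝ E := (AddMonoidHom.mk' φ hadd).toRealLinearMap hφcont
  have hL : ∀ r, L r = φ r := fun _ ↦ rfl
  simpa only [hL, real_inner_comm] using existsUnique_forall_eq_inner L

/-- Let `n ≥ 1` and `φ : ℝ^n → ℝ` be continuous with `φ (r + c) = φ r + φ c` for every
`r` and every `c` with all coordinates strictly positive. Then there is a unique
`μ ∈ ℝ^n` with `φ r = ⟪r, μ⟫` for all `r`. -/
theorem stmt_13 {n : ℕ} (hn : 1 ≤ n) (φ : EuclideanSpace ℝ (Fin n) → ℝ)
    (hφcont : Continuous φ)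
    (hφ : ∀ r c : EuclideanSpace ℝ (Fin n), (∀ i, 0 < c i) → φ (r + c) = φ r + φ c) :
    ∃! μ : EuclideanSpace ℝ (Fin n), ∀ r, φ r = ⟪r, μ⟫ := by
  have hne := nonempty_setOf_forall_pos (Fin n)
  have hgen := addSubgroup_closure_eq_top_of_isOpen (isOpen_setOf_forall_pos (Fin n)) hne
  exact stmt_13_general hne (by simp [hgen]) hφcont hφ
end
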